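/- Let m, c, n₀, θ > 0 and u ∈ ℝ³, and set γ = mc²/θ, u⁰ = √(|u|² + c²). Then for all i, j, k ∈ {1,2,3}, c ∫_{ℝ³} (p_i p_j p_k / p⁰) M(p) dp = [n₀ m² / (γ K₂(γ))] (6K₃(γ) + γK₂(γ)) u_i u_j u_k + [n₀ m² c² K₃(γ) / (γ K₂(γ))] ( u_i δ_{jk} + u_j δ_{ik} + u_k δ_{ij} ), where δ is the Kronecker delta. -/

import Mathlib

/-! The measure `dp / p⁰` is Lorentz invariant (`integral_boost`): the boost `B` with velocity `u` is
a bijection of momentum space whose Jacobian at `p` is `(B p)⁰ / p⁰`. Since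
`u · B p - u⁰ (B p)⁰ = -c p⁰` (`lorentz_invariance`), the integral becomes
`∫ (B p)ᵢ (B p)ⱼ (B p)ₖ exp(-κ p⁰) dp / p⁰` with `κ = c / θ`.

Each `(B p)ᵢ` is `Lᵢ · p + uᵢ p⁰ / c`, where `L` is a matrix with `L Lᵀ = 1 + u uᵀ / c²`
(`dot3_boostRow`). The terms odd in `p` cancel, and isotropy replaces `pₐ p_b` by `δₐ_b |p|² / 3`
(`second_moment`), which leaves the integrals of `exp(-κ p⁰)` and `|p|² exp(-κ p⁰)`
(`integral_boost_even`).

In polar coordinates these are the radial moments `∫₀^∞ rⁿ exp(-κ √(m²c² + r²)) dr` for `n = 2, 4`.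
The substitution `l = κ √(m²c² + r²)` and one integration by parts identify them with `K₂(γ)` and
`K₃(γ)` (`bessel_integral`, `Kbessel_two`, `Kbessel_three`). -/

noncomputable section

open MeasureTheory

/-- Euclidean inner product on ℝ³. -/
def dot3 (p q : Fin 3 → ℝ) : ℝ := ∑ i, p i * q i

/-- The relativistic energy `p⁰ = √(m²c² + |p|²)`. -/
noncomputable def pZero (m c : ℝ) (p : Fin 3 → ℝ) : ℝ :=
  Real.sqrt (m ^ 2 * c ^ 2 + dot3 p p)

/-- Modified Bessel function of the second kind (integral formula). -/
noncomputable def Kbessel (j : ℕ) (γ : ℝ) : ℝ :=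
  (2 ^ j * (Nat.factorial j : ℝ) / (Nat.factorial (2 * j) : ℝ)) * γ ^ (-(j : ℤ)) *
    ∫ l in Set.Ioi γ, Real.exp (-l) * (l ^ 2 - γ ^ 2) ^ ((j : ℝ) - 1 / 2)

/-- The local relativistic Maxwellian
`M(p) = [n₀γ/(4πm³c³K₂(γ))] exp((u·p − u⁰p⁰)/θ)` with `γ = mc²/θ`,
`u⁰ = √(|u|² + c²)`. -/
noncomputable def Mloc (m c n₀ θ : ℝ) (u : Fin 3 → ℝ) (p : Fin 3 → ℝ) : ℝ :=
  n₀ * (m * c ^ 2 / θ) / (4 * Real.pi * m ^ 3 * c ^ 3 * Kbessel 2 (m * c ^ 2 / θ)) *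
    Real.exp ((dot3 u p - Real.sqrt (dot3 u u + c ^ 2) * pZero m c p) / θ)

/-! ### Energy bounds and integrability -/

theorem dot3_eq (p q : Fin 3 → ℝ) : dot3 p q = p 0 * q 0 + p 1 * q 1 + p 2 * q 2 := by
  simp [dot3, Fin.sum_univ_three]

theorem dot3_self_nonneg (p : Fin 3 → ℝ) : 0 ≤ dot3 p p :=
  Finset.sum_nonneg fun i _ => mul_self_nonneg (p i)

theorem sq_le_dot3_self (p : Fin 3 → ℝ) (i : Fin 3) : p i ^ 2 ≤ dot3 p p := by
  rw [sq]
  exact Finset.single_le_sum (f := fun i => p i * p i) (fun i _ => mul_self_nonneg (p i))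
    (Finset.mem_univ i)

theorem continuous_dot3 (q : Fin 3 → ℝ) : Continuous fun p => dot3 p q := by
  unfold dot3; fun_prop

theorem continuous_dot3_self : Continuous fun p : Fin 3 → ℝ => dot3 p p := by
  unfold dot3; fun_prop

theorem continuous_pZero (m c : ℝ) : Continuous (pZero m c) := by
  unfold pZero dot3; fun_prop

theorem pZero_sq (m c : ℝ) (p : Fin 3 → ℝ) : pZero m c p ^ 2 = m ^ 2 * c ^ 2 + dot3 p p := by
  have := dot3_self_nonneg p
  exact Real.sq_sqrt (by positivity)

theorem pZero_pos {m c : ℝ} (hm : 0 < m) (hc : 0 < c) (p : Fin 3 → ℝ) : 0 < pZero m c p := by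
  have := dot3_self_nonneg p
  exact Real.sqrt_pos.2 (by positivity)

theorem abs_le_pZero (m c : ℝ) (p : Fin 3 → ℝ) (i : Fin 3) : |p i| ≤ pZero m c p := by
  apply Real.abs_le_sqrt
  nlinarith [sq_le_dot3_self p i, sq_nonneg (m * c)]

theorem norm_le_pZero (m c : ℝ) (p : Fin 3 → ℝ) : ‖p‖ ≤ pZero m c p :=
  (pi_norm_le_iff_of_nonneg (Real.sqrt_nonneg _)).2 fun i => abs_le_pZero m c p i

/-- Integrability against the exponential weight: `(1 + q)^N exp(-κ q)` is bounded, so `f` is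
dominated by a power of `1 + ‖x‖` below minus the dimension. -/
theorem integrable_of_le_pow_mul_exp {E : Type*} [NormedAddCommGroup E] [NormedSpace ℝ E]
    [FiniteDimensional ℝ E] [MeasurableSpace E] [BorelSpace E] (μ : Measure E)
    [μ.IsAddHaarMeasure] {q f : E → ℝ} (hq : ∀ x, ‖x‖ ≤ q x) (hf : Continuous f)
    {κ : ℝ} (hκ : 0 < κ) (C : ℝ) (n : ℕ)
    (hle : ∀ x, |f x| ≤ C * (q x ^ n * Real.exp (-(κ * q x)))) : Integrable f μ := by
  obtain ⟨d, hd⟩ : ∃ d : ℕ, Module.finrank ℝ E < d := ⟨_, Nat.lt_succ_self _⟩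
  have hint := (integrable_one_add_norm (E := E) (μ := μ) (r := (d : ℝ)) (by exact_mod_cast hd))
  set N := n + d
  set D : ℝ := |C| * (N.factorial / κ ^ N * Real.exp κ)
  refine (hint.const_mul D).mono' hf.aestronglyMeasurable (Filter.Eventually.of_forall fun x => ?_)
  have hx0 : 0 ≤ ‖x‖ := norm_nonneg x
  have hq0 : 0 ≤ q x := hx0.trans (hq x)
  have h1 := Real.pow_div_factorial_le_exp (κ * (1 + q x)) (by positivity) N
  have h2 : (1 + q x) ^ N * Real.exp (-(κ * q x)) ≤ N.factorial / κ ^ N * Real.exp κ := by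
    rw [div_le_iff₀ (by positivity), mul_pow, mul_add, mul_one, Real.exp_add] at h1
    rw [Real.exp_neg, ← div_eq_mul_inv, div_le_iff₀ (Real.exp_pos _), div_mul_eq_mul_div,
      div_mul_eq_mul_div, le_div_iff₀ (by positivity)]
    linarith
  have h3 : q x ^ n * (1 + ‖x‖) ^ d ≤ (1 + q x) ^ N := by
    rw [pow_add]
    have := hq x
    gcongr
    linarith
  rw [Real.rpow_neg (by positivity), Real.rpow_natCast, ← div_eq_mul_inv,
    le_div_iff₀ (by positivity), Real.norm_eq_abs]
  calc |f x| * (1 + ‖x‖) ^ d ≤ (|C| * (q x ^ n * Real.exp (-(κ * q x)))) * (1 + ‖x‖) ^ d := by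
        gcongr
        exact (hle x).trans (by gcongr; exact le_abs_self C)
    _ = |C| * ((q x ^ n * (1 + ‖x‖) ^ d) * Real.exp (-(κ * q x))) := by ring
    _ ≤ |C| * ((1 + q x) ^ N * Real.exp (-(κ * q x))) := by gcongr
    _ ≤ D := mul_le_mul_of_nonneg_left h2 (abs_nonneg C)

theorem integrable_mul_exp {m c κ : ℝ} (hκ : 0 < κ) {f : (Fin 3 → ℝ) → ℝ} (hf : Continuous f)
    (C : ℝ) (n : ℕ) (hle : ∀ p, |f p| ≤ C * pZero m c p ^ n) :
    Integrable fun p => f p * Real.exp (-(κ * pZero m c p)) := by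
  refine integrable_of_le_pow_mul_exp volume (norm_le_pZero m c)
    (hf.mul ((continuous_pZero m c).const_mul κ).neg.rexp) hκ C n fun p => ?_
  rw [abs_mul, Real.abs_exp, ← mul_assoc]
  exact mul_le_mul_of_nonneg_right (hle p) (Real.exp_pos _).le

/-! ### Isotropy of the second moments -/

/-- Lebesgue measure is invariant under reflection of the coordinate `a`. -/
theorem integral_flip (a : Fin 3) (F : (Fin 3 → ℝ) → ℝ) :
    ∫ p : Fin 3 → ℝ, F (fun i => if i = a then -p i else p i) = ∫ p, F p := by
  have h := volume_preserving_pi (α' := fun _ : Fin 3 => ℝ) (β' := fun _ : Fin 3 => ℝ)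
    (f := fun i x => if i = a then -x else x) (fun i => by
      by_cases h : i = a
      · simpa [h] using Measure.measurePreserving_neg (volume : Measure ℝ)
      · simpa [h] using! MeasurePreserving.id (volume : Measure ℝ))
  refine h.integral_comp ?_ F
  have hinv : Function.Involutive
      (fun (p : Fin 3 → ℝ) (i : Fin 3) => if i = a then -p i else p i) := by
    intro p; ext i; dsimp only; split_ifs <;> simp
  exact (MeasurableEquiv.mk hinv.toPerm h.measurable h.measurable).measurableEmbedding

theorem integral_perm (σ : Equiv.Perm (Fin 3)) (F : (Fin 3 → ℝ) → ℝ) :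
    ∫ p : Fin 3 → ℝ, F (fun i => p (σ i)) = ∫ p, F p := by
  have h := volume_measurePreserving_piCongrLeft (fun _ : Fin 3 => ℝ) σ.symm
  rw [← h.integral_comp' F]
  refine integral_congr_ae (Filter.Eventually.of_forall fun p => ?_)
  dsimp only
  congr 1
  ext i
  obtain ⟨j, rfl⟩ := σ.symm.surjective i
  rw [MeasurableEquiv.coe_piCongrLeft, Equiv.piCongrLeft_apply_apply, Equiv.apply_symm_apply]

/-- The off-diagonal second moments of a weight depending on `|p|` only vanish by reflection, and
the diagonal ones agree by exchange of coordinates. -/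
theorem second_moment {m c κ : ℝ} (hκ : 0 < κ) (a b : Fin 3) :
    ∫ p : Fin 3 → ℝ, p a * p b * Real.exp (-(κ * pZero m c p)) =
      if a = b then (∫ p : Fin 3 → ℝ, dot3 p p * Real.exp (-(κ * pZero m c p))) / 3 else 0 := by
  split_ifs with hab
  · subst hab
    have hint : ∀ b : Fin 3,
        Integrable fun p : Fin 3 → ℝ => p b * p b * Real.exp (-(κ * pZero m c p)) := fun b => by
      refine integrable_mul_exp hκ (by fun_prop) 1 2 fun p => ?_
      have := abs_le_pZero m c p b
      rw [abs_mul, one_mul, sq]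
      exact mul_self_le_mul_self (abs_nonneg _) this
    have heq : ∀ b : Fin 3, ∫ p : Fin 3 → ℝ, p b * p b * Real.exp (-(κ * pZero m c p)) =
        ∫ p : Fin 3 → ℝ, p a * p a * Real.exp (-(κ * pZero m c p)) := fun b => by
      rw [← integral_perm (Equiv.swap a b)
        (fun p : Fin 3 → ℝ => p a * p a * Real.exp (-(κ * pZero m c p)))]
      refine integral_congr_ae (Filter.Eventually.of_forall fun p => ?_)
      have : pZero m c (fun i => p (Equiv.swap a b i)) = pZero m c p := by
        unfold pZero dot3
        rw [Equiv.sum_comp (Equiv.swap a b) (fun i => p i * p i)]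
      simp [this]
    have : (fun p : Fin 3 → ℝ => dot3 p p * Real.exp (-(κ * pZero m c p))) =
        fun p => ∑ b, p b * p b * Real.exp (-(κ * pZero m c p)) := by
      ext p; rw [dot3, Finset.sum_mul]
    rw [this, integral_finsetSum _ fun b _ => hint b]
    simp [heq]
  · have h := integral_flip a fun p : Fin 3 → ℝ => p a * p b * Real.exp (-(κ * pZero m c p))
    have hp : ∀ p : Fin 3 → ℝ, pZero m c (fun i => if i = a then -p i else p i) = pZero m c p := by
      intro p
      unfold pZero dot3
      congr 2
      refine Finset.sum_congr rfl fun i _ => ?_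
      dsimp only; split_ifs <;> ring
    simp only [hp, if_true, if_neg (Ne.symm hab), neg_mul, integral_neg] at h
    linarith

/-! ### The Lorentz boost -/

/-- The momentum part of the Lorentz boost with four-velocity `(√(|u|² + c²), u)`, restricted to the
mass shell: it sends the rest momentum `p = 0` to `m u`. -/
def boost (m c : ℝ) (u p : Fin 3 → ℝ) : Fin 3 → ℝ :=
  p + (dot3 u p / (c * (c + Real.sqrt (dot3 u u + c ^ 2))) + pZero m c p / c) • u

theorem dot3_add_smul (p u : Fin 3 → ℝ) (s : ℝ) :
    dot3 (p + s • u) (p + s • u) = dot3 p p + 2 * s * dot3 u p + s ^ 2 * dot3 u u := by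
  simp [dot3_eq]; ring

theorem dot3_sq_le (u p : Fin 3 → ℝ) : dot3 u p ^ 2 ≤ dot3 u u * dot3 p p := by
  simp only [dot3_eq]
  nlinarith [sq_nonneg (u 0 * p 1 - u 1 * p 0), sq_nonneg (u 0 * p 2 - u 2 * p 0),
    sq_nonneg (u 1 * p 2 - u 2 * p 1)]

/-- Positivity of `u⁰ p⁰ + u · p`, by the Cauchy-Schwarz inequality. -/
theorem boosted_energy_pos {m c : ℝ} (hm : 0 < m) (hc : 0 < c) (u p : Fin 3 → ℝ) :
    0 < Real.sqrt (dot3 u u + c ^ 2) * pZero m c p + dot3 u p := by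
  have hu := dot3_self_nonneg u
  have hp := dot3_self_nonneg p
  have : |dot3 u p| < Real.sqrt (dot3 u u + c ^ 2) * pZero m c p := by
    rw [pZero, ← Real.sqrt_mul (by positivity)]
    apply Real.lt_sqrt_of_sq_lt
    rw [sq_abs]
    have h := dot3_sq_le u p
    have : 0 < c ^ 2 * (m ^ 2 * c ^ 2) := by positivity
    have h1 : 0 ≤ c ^ 2 * dot3 p p := by positivity
    have h2 : 0 ≤ dot3 u u * (m ^ 2 * c ^ 2) := by positivity
    linarith [show (dot3 u u + c ^ 2) * (m ^ 2 * c ^ 2 + dot3 p p) = dot3 u u * (m ^ 2 * c ^ 2)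
      + dot3 u u * dot3 p p + c ^ 2 * (m ^ 2 * c ^ 2) + c ^ 2 * dot3 p p by ring]
  linarith [neg_abs_le (dot3 u p)]

theorem pZero_boost {m c : ℝ} (hm : 0 < m) (hc : 0 < c) (u p : Fin 3 → ℝ) :
    pZero m c (boost m c u p) = (Real.sqrt (dot3 u u + c ^ 2) * pZero m c p + dot3 u p) / c := by
  have hpos := boosted_energy_pos hm hc u p
  have hu := dot3_self_nonneg u
  have hu0 : Real.sqrt (dot3 u u + c ^ 2) ^ 2 = dot3 u u + c ^ 2 := Real.sq_sqrt (by positivity)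
  have hu0' := Real.sqrt_nonneg (dot3 u u + c ^ 2)
  have hp := pZero_sq m c p
  rw [← Real.sqrt_sq (div_pos hpos hc).le]
  rw [pZero, boost, dot3_add_smul]
  congr 1
  set U := Real.sqrt (dot3 u u + c ^ 2)
  have hA : dot3 u u = U ^ 2 - c ^ 2 := by linarith
  have hP : dot3 p p = pZero m c p ^ 2 - m ^ 2 * c ^ 2 := by linarith
  rw [hA, hP]
  field_simp
  ring

theorem dot3_boost {m c : ℝ} (hc : 0 < c) (u p : Fin 3 → ℝ) :
    dot3 u (boost m c u p) =
      (Real.sqrt (dot3 u u + c ^ 2) * dot3 u p + dot3 u u * pZero m c p) / c := by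
  have hu := dot3_self_nonneg u
  have hu0 : Real.sqrt (dot3 u u + c ^ 2) ^ 2 = dot3 u u + c ^ 2 := Real.sq_sqrt (by positivity)
  have hu0' := Real.sqrt_nonneg (dot3 u u + c ^ 2)
  have h : dot3 u (boost m c u p) = dot3 u p +
      (dot3 u p / (c * (c + Real.sqrt (dot3 u u + c ^ 2))) + pZero m c p / c) * dot3 u u := by
    simp only [boost, dot3_eq, Pi.add_apply, Pi.smul_apply, smul_eq_mul]; ring
  rw [h]
  set U := Real.sqrt (dot3 u u + c ^ 2)
  have hA : dot3 u u = U ^ 2 - c ^ 2 := by linarith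
  rw [hA]
  field_simp
  ring

theorem boost_neg_boost {m c : ℝ} (hm : 0 < m) (hc : 0 < c) (u p : Fin 3 → ℝ) :
    boost m c (-u) (boost m c u p) = p := by
  have hn : dot3 (-u) (-u) = dot3 u u := by simp [dot3]
  have hn' : dot3 (-u) (boost m c u p) = -dot3 u (boost m c u p) := by simp [dot3]
  have hu := dot3_self_nonneg u
  have hu0 : Real.sqrt (dot3 u u + c ^ 2) ^ 2 = dot3 u u + c ^ 2 := Real.sq_sqrt (by positivity)
  have hu0' := Real.sqrt_nonneg (dot3 u u + c ^ 2)
  rw [boost, hn, hn', pZero_boost hm hc, dot3_boost hc]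
  conv_lhs => enter [1]; rw [boost]
  rw [smul_neg, ← sub_eq_add_neg, add_sub_assoc, ← sub_smul]
  convert add_zero p
  convert zero_smul ℝ u
  set U := Real.sqrt (dot3 u u + c ^ 2)
  have hA : dot3 u u = U ^ 2 - c ^ 2 := by linarith
  rw [hA]
  field_simp
  ring

theorem boost_boost_neg {m c : ℝ} (hm : 0 < m) (hc : 0 < c) (u p : Fin 3 → ℝ) :
    boost m c u (boost m c (-u) p) = p := by
  simpa using boost_neg_boost hm hc (-u) p

/-- The boost turns the exponent of the Maxwellian into the one at rest. -/
theorem lorentz_invariance {m c : ℝ} (hm : 0 < m) (hc : 0 < c) (u p : Fin 3 → ℝ) :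
    dot3 u (boost m c u p) - Real.sqrt (dot3 u u + c ^ 2) * pZero m c (boost m c u p) =
      -(c * pZero m c p) := by
  have hu := dot3_self_nonneg u
  have hu0 : Real.sqrt (dot3 u u + c ^ 2) ^ 2 = dot3 u u + c ^ 2 := Real.sq_sqrt (by positivity)
  rw [pZero_boost hm hc, dot3_boost hc]
  field_simp
  linear_combination (-pZero m c p) * hu0

/-- The linear form `p ↦ v · p`. -/
def dotL (v : Fin 3 → ℝ) : (Fin 3 → ℝ) →L[ℝ] ℝ :=
  ∑ i, v i • ContinuousLinearMap.proj (R := ℝ) (φ := fun _ : Fin 3 => ℝ) i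

theorem dotL_apply (v p : Fin 3 → ℝ) : dotL v p = dot3 v p := by
  simp [dotL, dot3]

theorem hasFDerivAt_pZero {m c : ℝ} (hm : 0 < m) (hc : 0 < c) (p : Fin 3 → ℝ) :
    HasFDerivAt (pZero m c) ((pZero m c p)⁻¹ • dotL p) p := by
  have h1 : HasFDerivAt (fun p : Fin 3 → ℝ => m ^ 2 * c ^ 2 + dot3 p p) ((2 : ℝ) • dotL p) p := by
    refine HasFDerivAt.const_add _ ?_
    have : ∀ i ∈ Finset.univ, HasFDerivAt (fun p : Fin 3 → ℝ => p i * p i) _ p := fun i _ =>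
      (hasFDerivAt_apply (𝕜 := ℝ) i p).mul (hasFDerivAt_apply (𝕜 := ℝ) i p)
    refine (HasFDerivAt.fun_sum this).congr_fderiv ?_
    ext v
    simp [dotL, Finset.mul_sum, ← two_mul]
  have h2 := h1.sqrt (by rw [← pZero_sq]; exact (pow_pos (pZero_pos hm hc p) 2).ne')
  refine h2.congr_fderiv ?_
  change (1 / (2 * pZero m c p)) • _ = _
  rw [smul_smul]
  congr 1
  have := pZero_pos hm hc p
  field_simp

theorem hasFDerivAt_boost {m c : ℝ} (hm : 0 < m) (hc : 0 < c) (u p : Fin 3 → ℝ) :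
    HasFDerivAt (boost m c u) (ContinuousLinearMap.id ℝ (Fin 3 → ℝ) +
      ((c * (c + Real.sqrt (dot3 u u + c ^ 2)))⁻¹ • dotL u +
        (c⁻¹ * (pZero m c p)⁻¹) • dotL p).smulRight u) p := by
  have h1 : HasFDerivAt (fun p => dot3 u p / (c * (c + Real.sqrt (dot3 u u + c ^ 2))))
      ((c * (c + Real.sqrt (dot3 u u + c ^ 2)))⁻¹ • dotL u) p := by
    have := ((dotL u).hasFDerivAt (x := p)).const_mul (c * (c + Real.sqrt (dot3 u u + c ^ 2)))⁻¹
    simp only [dotL_apply] at this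
    simpa only [div_eq_inv_mul] using this
  have h2 := (hasFDerivAt_pZero hm hc p).const_mul c⁻¹
  simp only [← div_eq_inv_mul, smul_smul] at h2
  refine ((hasFDerivAt_id p).add ((h1.add h2).smul_const u)).congr_fderiv ?_
  simp [div_eq_mul_inv, mul_comm]

/-- The derivative of the boost is the identity plus a rank-one map, so its determinant is one plus
a trace; it equals the ratio of the energies. -/
theorem det_boost {m c : ℝ} (hm : 0 < m) (hc : 0 < c) (u p : Fin 3 → ℝ) :
    (ContinuousLinearMap.id ℝ (Fin 3 → ℝ) +
      ((c * (c + Real.sqrt (dot3 u u + c ^ 2)))⁻¹ • dotL u +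
        (c⁻¹ * (pZero m c p)⁻¹) • dotL p).smulRight u).det =
      pZero m c (boost m c u p) / pZero m c p := by
  set φ := (c * (c + Real.sqrt (dot3 u u + c ^ 2)))⁻¹ • dotL u +
        (c⁻¹ * (pZero m c p)⁻¹) • dotL p with hφ
  have h : (ContinuousLinearMap.id ℝ (Fin 3 → ℝ) + φ.smulRight u).det = 1 + φ u := by
    rw [ContinuousLinearMap.det, ← ContinuousLinearMap.coe_coe φ, ← LinearMap.transvection.det]
    congr 1
  rw [h, pZero_boost hm hc, hφ]
  simp only [add_apply, smul_apply, dotL_apply, smul_eq_mul]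
  have hp0 := pZero_pos hm hc p
  have hu := dot3_self_nonneg u
  have hu0 : Real.sqrt (dot3 u u + c ^ 2) ^ 2 = dot3 u u + c ^ 2 := Real.sq_sqrt (by positivity)
  have hu0' := Real.sqrt_nonneg (dot3 u u + c ^ 2)
  have hcomm : dot3 p u = dot3 u p := by simp [dot3, mul_comm]
  rw [hcomm]
  set U := Real.sqrt (dot3 u u + c ^ 2)
  have hA : dot3 u u = U ^ 2 - c ^ 2 := by linarith
  rw [hA]
  field_simp
  ring

/-- Lorentz invariance of the measure `dp / p⁰`. -/
theorem integral_boost {m c : ℝ} (hm : 0 < m) (hc : 0 < c) (u : Fin 3 → ℝ)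
    (g : (Fin 3 → ℝ) → ℝ) :
    ∫ p, g p / pZero m c p = ∫ p, g (boost m c u p) / pZero m c p := by
  have hinj : Function.Injective (boost m c u) :=
    Function.LeftInverse.injective (g := boost m c (-u)) (boost_neg_boost hm hc u)
  have hsurj : Function.Surjective (boost m c u) :=
    Function.RightInverse.surjective (g := boost m c (-u)) (boost_boost_neg hm hc u)
  have h := integral_image_eq_integral_abs_det_fderiv_smul volume (s := Set.univ)
    MeasurableSet.univ (fun p _ => (hasFDerivAt_boost hm hc u p).hasFDerivWithinAt)
    hinj.injOn (fun p => g p / pZero m c p)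
  rw [Set.image_univ, hsurj.range_eq, setIntegral_univ, setIntegral_univ] at h
  rw [h]
  refine integral_congr_ae (Filter.Eventually.of_forall fun p => ?_)
  have h1 := pZero_pos hm hc p
  have h2 := pZero_pos hm hc (boost m c u p)
  simp only [det_boost hm hc, smul_eq_mul]
  rw [abs_of_pos (by positivity)]
  field_simp

/-! ### Radial moments -/

/-- The one-dimensional moment `∫₀^∞ rⁿ exp(-κ √(M² + r²)) dr`, with `M = mc` in the application. -/
def radialMoment (M κ : ℝ) (n : ℕ) : ℝ :=
  ∫ r in Set.Ioi (0 : ℝ), r ^ n * Real.exp (-(κ * Real.sqrt (M ^ 2 + r ^ 2)))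

theorem abs_le_sqrt_sq_add (M r : ℝ) : |r| ≤ Real.sqrt (M ^ 2 + r ^ 2) :=
  Real.abs_le_sqrt (by nlinarith [sq_nonneg M])

theorem sqrt_sq_add_pos {M : ℝ} (hM : 0 < M) (r : ℝ) : 0 < Real.sqrt (M ^ 2 + r ^ 2) :=
  Real.sqrt_pos.2 (by positivity)

theorem integrable_pow_mul_exp (M : ℝ) {κ : ℝ} (hκ : 0 < κ) (n : ℕ) :
    Integrable fun r : ℝ => r ^ n * Real.exp (-(κ * Real.sqrt (M ^ 2 + r ^ 2))) := by
  refine integrable_of_le_pow_mul_exp volume (q := fun r => Real.sqrt (M ^ 2 + r ^ 2))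
    (fun r => abs_le_sqrt_sq_add M r) (by fun_prop) hκ 1 n fun r => ?_
  rw [abs_mul, Real.abs_exp, abs_pow, one_mul]
  have := abs_le_sqrt_sq_add M r
  gcongr

theorem hasDerivAt_sqrt_sq_add {M : ℝ} (hM : 0 < M) (r : ℝ) :
    HasDerivAt (fun r => Real.sqrt (M ^ 2 + r ^ 2)) (r / Real.sqrt (M ^ 2 + r ^ 2)) r := by
  have h := (((hasDerivAt_id r).pow 2).const_add (M ^ 2)).sqrt
    (by simp only [Pi.pow_apply, id]; positivity)
  simp only [Pi.pow_apply, id] at h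
  refine h.congr_deriv ?_
  have := sqrt_sq_add_pos hM r
  push_cast
  field_simp

/-- Integration by parts: the derivative of `exp(-κ √(M² + r²))` is
`-κ r / √(M² + r²)` times itself, and the boundary terms of `r^(n+1) exp(-κ √(M² + r²))` vanish. -/
theorem radial_by_parts {M κ : ℝ} (hM : 0 < M) (hκ : 0 < κ) (n : ℕ) :
    κ * ∫ r in Set.Ioi (0 : ℝ), r ^ (n + 2) / Real.sqrt (M ^ 2 + r ^ 2) *
        Real.exp (-(κ * Real.sqrt (M ^ 2 + r ^ 2))) = (n + 1) * radialMoment M κ n := by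
  have hder : ∀ r : ℝ, HasDerivAt
      (fun r => r ^ (n + 1) * Real.exp (-(κ * Real.sqrt (M ^ 2 + r ^ 2))))
      ((n + 1) * (r ^ n * Real.exp (-(κ * Real.sqrt (M ^ 2 + r ^ 2)))) -
        κ * (r ^ (n + 2) / Real.sqrt (M ^ 2 + r ^ 2) *
          Real.exp (-(κ * Real.sqrt (M ^ 2 + r ^ 2))))) r := fun r => by
    have h := (hasDerivAt_pow (n + 1) r).mul
      (((hasDerivAt_sqrt_sq_add hM r).const_mul κ).neg.exp)
    refine h.congr_deriv ?_
    push_cast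
    simp only [Pi.neg_apply]
    ring_nf
  have hi1 := (integrable_pow_mul_exp M hκ n)
  have hi2 : Integrable fun r : ℝ => r ^ (n + 2) / Real.sqrt (M ^ 2 + r ^ 2) *
          Real.exp (-(κ * Real.sqrt (M ^ 2 + r ^ 2))) := by
    refine integrable_of_le_pow_mul_exp volume (q := fun r => Real.sqrt (M ^ 2 + r ^ 2))
      (fun r => abs_le_sqrt_sq_add M r) ?_ hκ 1 (n + 1) fun r => ?_
    · exact ((continuous_pow _).div (by fun_prop) fun r => (sqrt_sq_add_pos hM r).ne').mul
        (by fun_prop)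
    · have h0 := sqrt_sq_add_pos hM r
      rw [abs_mul, Real.abs_exp, abs_div, abs_pow, one_mul, abs_of_pos h0]
      have := abs_le_sqrt_sq_add M r
      gcongr
      rw [div_le_iff₀ h0, ← pow_succ]
      gcongr
  have hlim : Filter.Tendsto
      (fun r : ℝ => r ^ (n + 1) * Real.exp (-(κ * Real.sqrt (M ^ 2 + r ^ 2))))
      Filter.atTop (nhds 0) := by
    have h := (Real.tendsto_pow_mul_exp_neg_atTop_nhds_zero (n + 1)).comp
      (Filter.tendsto_id.const_mul_atTop hκ)
    have h' := h.const_mul (κ ^ (n + 1))⁻¹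
    rw [mul_zero] at h'
    refine squeeze_zero' ?_ ?_ h'
    · filter_upwards [Filter.eventually_ge_atTop 0] with r hr
      positivity
    · filter_upwards [Filter.eventually_ge_atTop 0] with r hr
      have := (le_abs_self r).trans (abs_le_sqrt_sq_add M r)
      simp only [Function.comp, id]
      rw [mul_pow, mul_assoc, inv_mul_cancel_left₀ (by positivity)]
      gcongr
  have h := integral_Ioi_of_hasDerivAt_of_tendsto' (a := 0) (fun r _ => hder r)
    ((hi1.const_mul _).sub (hi2.const_mul _)).integrableOn hlim
  rw [integral_sub (hi1.const_mul _).integrableOn (hi2.const_mul _).integrableOn,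
    integral_const_mul, integral_const_mul] at h
  rw [radialMoment]
  simp only [ne_eq, Nat.add_eq_zero_iff, one_ne_zero, and_false, not_false_eq_true, zero_pow,
    zero_mul, sub_zero] at h
  linarith

/-- The Bessel integral of order `n + 1` as a radial moment, by `l = κ √(M² + r²)`. Under this
substitution `l² - γ² = (κ r)²`, so the half-integer power becomes a natural power of `r`. -/
theorem bessel_integral {M κ : ℝ} (hM : 0 < M) (hκ : 0 < κ) (n : ℕ) :
    ∫ l in Set.Ioi (κ * M), Real.exp (-l) * (l ^ 2 - (κ * M) ^ 2) ^ (((n + 1 : ℕ) : ℝ) - 1 / 2) =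
      κ ^ (2 * n + 1) * ((2 * n + 1) * radialMoment M κ (2 * n)) := by
  have himg : (fun r => κ * Real.sqrt (M ^ 2 + r ^ 2)) '' Set.Ioi 0 = Set.Ioi (κ * M) := by
    ext l
    simp only [Set.mem_image, Set.mem_Ioi]
    constructor
    · rintro ⟨r, hr, rfl⟩
      have : M < Real.sqrt (M ^ 2 + r ^ 2) :=
        Real.lt_sqrt_of_sq_lt (by nlinarith [pow_pos hr 2])
      gcongr
    · intro hl
      have h1 : M < l / κ := by rw [lt_div_iff₀ hκ]; linarith
      have h2 : M ^ 2 < (l / κ) ^ 2 := by gcongr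
      refine ⟨Real.sqrt ((l / κ) ^ 2 - M ^ 2), Real.sqrt_pos.2 (by linarith), ?_⟩
      rw [Real.sq_sqrt (by linarith), add_sub_cancel, Real.sqrt_sq (by linarith)]
      field_simp
  have hinj : Set.InjOn (fun r => κ * Real.sqrt (M ^ 2 + r ^ 2)) (Set.Ioi 0) := by
    intro r hr s hs h
    have h1 := mul_left_cancel₀ hκ.ne' h
    have h2 := (Real.sqrt_inj (by positivity) (by positivity)).1 h1
    exact (pow_left_inj₀ (le_of_lt hr) (le_of_lt hs) two_ne_zero).1 (by linarith)
  rw [← himg, integral_image_eq_integral_abs_deriv_smul measurableSet_Ioi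
    (fun r _ => ((hasDerivAt_sqrt_sq_add hM r).const_mul κ).hasDerivWithinAt) hinj]
  have hparts := radial_by_parts hM hκ (2 * n)
  push_cast at hparts
  rw [← hparts, ← mul_assoc, ← integral_const_mul]
  refine setIntegral_congr_fun measurableSet_Ioi fun r hr => ?_
  have hr : 0 < r := hr
  have h0 := sqrt_sq_add_pos hM r
  have hsq : Real.sqrt (M ^ 2 + r ^ 2) ^ 2 = M ^ 2 + r ^ 2 := Real.sq_sqrt (by positivity)
  have hrp : ((κ * Real.sqrt (M ^ 2 + r ^ 2)) ^ 2 - (κ * M) ^ 2) ^ (((n + 1 : ℕ) : ℝ) - 1 / 2) =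
      (κ * r) ^ (2 * n + 1) := by
    rw [show (κ * Real.sqrt (M ^ 2 + r ^ 2)) ^ 2 - (κ * M) ^ 2 = (κ * r) ^ 2 by
      rw [mul_pow, hsq]; ring, ← Real.rpow_natCast (κ * r) 2, ← Real.rpow_mul (by positivity),
      ← Real.rpow_natCast]
    congr 1
    push_cast
    ring
  rw [hrp, abs_of_pos (by positivity), smul_eq_mul, mul_pow]
  ring

/-! ### Bessel functions and polar coordinates -/

theorem Kbessel_two {M κ : ℝ} (hM : 0 < M) (hκ : 0 < κ) :
    (κ * M) ^ 2 * Kbessel 2 (κ * M) = κ ^ 3 * radialMoment M κ 2 := by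
  have h := bessel_integral hM hκ 1
  norm_num at h
  rw [Kbessel]
  norm_num [Nat.factorial]
  rw [h]
  have : κ * M ≠ 0 := by positivity
  field_simp

theorem Kbessel_three {M κ : ℝ} (hM : 0 < M) (hκ : 0 < κ) :
    3 * (κ * M) ^ 3 * Kbessel 3 (κ * M) = κ ^ 5 * radialMoment M κ 4 := by
  have h := bessel_integral hM hκ 2
  norm_num at h
  rw [Kbessel]
  norm_num [Nat.factorial]
  rw [h]
  have : κ * M ≠ 0 := by positivity
  field_simp
  norm_num

/-- Polar coordinates on ℝ³. The coordinates `Fin 3 → ℝ` carry the sup norm, so the integral is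
transported to `EuclideanSpace`. -/
theorem integral_radial (f : ℝ → ℝ) :
    ∫ p : Fin 3 → ℝ, f (Real.sqrt (dot3 p p)) =
      4 * Real.pi * ∫ r in Set.Ioi (0 : ℝ), r ^ 2 * f r := by
  have h := integral_fun_norm_addHaar (volume : Measure (EuclideanSpace ℝ (Fin 3))) f
  rw [← (PiLp.volume_preserving_toLp (Fin 3)).integral_comp
    (MeasurableEquiv.toLp 2 _).measurableEmbedding] at h
  have hn : ∀ p : Fin 3 → ℝ, ‖WithLp.toLp 2 p‖ = Real.sqrt (dot3 p p) := fun p => by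
    rw [EuclideanSpace.norm_eq]; simp [dot3, sq]
  simp only [hn] at h
  rw [h, measureReal_def, EuclideanSpace.volume_ball_fin_three]
  simp only [finrank_euclideanSpace, Fintype.card_fin, smul_eq_mul, nsmul_eq_mul]
  rw [ENNReal.toReal_mul, ENNReal.toReal_ofReal (by positivity)]
  norm_num
  ring

theorem integral_exp_pZero {m c : ℝ} (κ : ℝ) :
    ∫ p : Fin 3 → ℝ, Real.exp (-(κ * pZero m c p)) =
      4 * Real.pi * radialMoment (m * c) κ 2 := by
  rw [radialMoment, ← integral_radial fun r => Real.exp (-(κ * Real.sqrt ((m * c) ^ 2 + r ^ 2)))]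
  refine integral_congr_ae (Filter.Eventually.of_forall fun p => ?_)
  dsimp only
  rw [Real.sq_sqrt (dot3_self_nonneg p), pZero, mul_pow]

theorem integral_dot3_exp_pZero {m c : ℝ} (κ : ℝ) :
    ∫ p : Fin 3 → ℝ, dot3 p p * Real.exp (-(κ * pZero m c p)) =
      4 * Real.pi * radialMoment (m * c) κ 4 := by
  have h := integral_radial fun r => r ^ 2 * Real.exp (-(κ * Real.sqrt ((m * c) ^ 2 + r ^ 2)))
  have h4 : ∀ r x : ℝ, r ^ 2 * (r ^ 2 * x) = r ^ 4 * x := fun r x => by ring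
  simp only [h4] at h
  rw [radialMoment, ← h]
  refine integral_congr_ae (Filter.Eventually.of_forall fun p => ?_)
  dsimp only
  rw [Real.sq_sqrt (dot3_self_nonneg p), pZero, mul_pow]

/-! ### The third moment in the rest frame -/

/-- Isotropy, in bilinear form. -/
theorem integral_dot3_mul_dot3 {m c κ : ℝ} (hκ : 0 < κ) (v w : Fin 3 → ℝ) :
    ∫ p : Fin 3 → ℝ, dot3 v p * dot3 w p * Real.exp (-(κ * pZero m c p)) =
      dot3 v w * ((∫ p : Fin 3 → ℝ, dot3 p p * Real.exp (-(κ * pZero m c p))) / 3) := by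
  have hint : ∀ a b : Fin 3,
      Integrable fun p : Fin 3 → ℝ => p a * p b * Real.exp (-(κ * pZero m c p)) := fun a b => by
    refine integrable_mul_exp hκ (by fun_prop) 1 2 fun p => ?_
    rw [abs_mul, one_mul, sq]
    exact mul_le_mul (abs_le_pZero m c p a) (abs_le_pZero m c p b) (abs_nonneg _)
      (Real.sqrt_nonneg _)
  have hexp : ∀ p : Fin 3 → ℝ, dot3 v p * dot3 w p * Real.exp (-(κ * pZero m c p)) =
      ∑ a, ∑ b, v a * w b * (p a * p b * Real.exp (-(κ * pZero m c p))) := fun p => by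
    rw [dot3, dot3, Finset.sum_mul_sum, Finset.sum_mul]
    refine Finset.sum_congr rfl fun a _ => ?_
    rw [Finset.sum_mul]
    exact Finset.sum_congr rfl fun b _ => by ring
  simp only [hexp]
  rw [integral_finsetSum _ fun a _ => integrable_finsetSum _ fun b _ => (hint a b).const_mul _]
  simp only [integral_finsetSum _ fun b _ => (hint _ b).const_mul _, integral_const_mul,
    second_moment hκ]
  simp [dot3, Finset.sum_mul]

/-- The row `i` of the linear part of the boost, so that
`(boost m c u p)ᵢ = boostRow c u i · p + (uᵢ / c) p⁰`. -/
def boostRow (c : ℝ) (u : Fin 3 → ℝ) (i : Fin 3) : Fin 3 → ℝ :=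
  Pi.single i 1 + (u i / (c * (c + Real.sqrt (dot3 u u + c ^ 2)))) • u

theorem boost_apply (m c : ℝ) (u p : Fin 3 → ℝ) (i : Fin 3) :
    boost m c u p i = dot3 (boostRow c u i) p + u i / c * pZero m c p := by
  have h1 : ∀ s : ℝ, dot3 (Pi.single i 1 + s • u) p = p i + s * dot3 u p := fun s => by
    simp [dot3, add_mul, Finset.sum_add_distrib, Finset.mul_sum, mul_assoc, Pi.single_apply]
  rw [boostRow, h1]
  simp only [boost, Pi.add_apply, Pi.smul_apply, smul_eq_mul]
  ring

/-- The spatial block `L` of the boost satisfies `L Lᵀ = 1 + u uᵀ / c²`. -/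
theorem dot3_boostRow {c : ℝ} (hc : 0 < c) (u : Fin 3 → ℝ) (i j : Fin 3) :
    dot3 (boostRow c u i) (boostRow c u j) = (if i = j then 1 else 0) + u i * u j / c ^ 2 := by
  have h1 : ∀ s t : ℝ, dot3 (Pi.single i 1 + s • u) (Pi.single j 1 + t • u) =
      (if i = j then 1 else 0) + t * u i + s * u j + s * t * dot3 u u := fun s t => by
    simp only [dot3, Pi.add_apply, Pi.smul_apply, smul_eq_mul, add_mul, mul_add,
      Finset.sum_add_distrib, Pi.single_apply, ite_mul, mul_ite, one_mul, mul_one, zero_mul,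
      mul_zero, Finset.sum_ite_eq', Finset.mem_univ, if_true, Finset.mul_sum]
    have h2 : (if i = j then (1 : ℝ) else 0) = if j = i then 1 else 0 := by simp [eq_comm]
    have h3 : ∑ x, s * u x * (t * u x) = ∑ x, s * t * (u x * u x) :=
      Finset.sum_congr rfl fun x _ => by ring
    rw [h3, h2]
    ring
  rw [boostRow, boostRow, h1]
  have hu := dot3_self_nonneg u
  have hu0 : Real.sqrt (dot3 u u + c ^ 2) ^ 2 = dot3 u u + c ^ 2 := Real.sq_sqrt (by positivity)
  have hu0' := Real.sqrt_nonneg (dot3 u u + c ^ 2)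
  set U := Real.sqrt (dot3 u u + c ^ 2)
  have hA : dot3 u u = U ^ 2 - c ^ 2 := by linarith
  rw [hA, add_assoc, add_assoc]
  congr 1
  field_simp
  ring

theorem abs_boost_le {m c : ℝ} (hm : 0 < m) (hc : 0 < c) (u p : Fin 3 → ℝ) (i : Fin 3) :
    |boost m c u p i| ≤ 2 * Real.sqrt (dot3 u u + c ^ 2) / c * pZero m c p := by
  refine (abs_le_pZero m c _ i).trans ?_
  rw [pZero_boost hm hc, div_mul_eq_mul_div]
  -- replacing `u` by `-u` in the positivity of the boosted energy bounds `u · p` from above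
  have h := boosted_energy_pos hm hc (-u) p
  have h1 : dot3 (-u) (-u) = dot3 u u := by simp [dot3]
  have h2 : dot3 (-u) p = -dot3 u p := by simp [dot3]
  rw [h1, h2] at h
  gcongr
  linarith

theorem continuous_boost {m c : ℝ} (hm : 0 < m) (hc : 0 < c) (u : Fin 3 → ℝ) :
    Continuous (boost m c u) :=
  continuous_iff_continuousAt.2 fun p => (hasFDerivAt_boost hm hc u p).continuousAt

theorem integrable_boost {m c κ : ℝ} (hm : 0 < m) (hc : 0 < c) (hκ : 0 < κ) (u : Fin 3 → ℝ)
    (i j k : Fin 3) : Integrable fun p : Fin 3 → ℝ =>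
      boost m c u p i * boost m c u p j * boost m c u p k / pZero m c p *
        Real.exp (-(κ * pZero m c p)) := by
  have hb : ∀ i, Continuous fun p => boost m c u p i := fun i =>
    (continuous_apply i).comp (continuous_boost hm hc u)
  refine integrable_mul_exp hκ ((((hb i).mul (hb j)).mul (hb k)).div (continuous_pZero m c)
    fun p => (pZero_pos hm hc p).ne') ((2 * Real.sqrt (dot3 u u + c ^ 2) / c) ^ 3) 2 fun p => ?_
  have h0 := pZero_pos hm hc p
  rw [abs_div, abs_mul, abs_mul, abs_of_pos h0, div_le_iff₀ h0]
  calc _ ≤ (2 * Real.sqrt (dot3 u u + c ^ 2) / c * pZero m c p) *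
        (2 * Real.sqrt (dot3 u u + c ^ 2) / c * pZero m c p) *
        (2 * Real.sqrt (dot3 u u + c ^ 2) / c * pZero m c p) := by
        gcongr <;> exact abs_boost_le hm hc u p _
    _ = _ := by ring

/-- In the rest frame only the part of the integrand that is even in `p` contributes; it is a
combination of second moments of the isotropic weight `exp(-κ p⁰)`. -/
theorem integral_boost_even {m c κ : ℝ} (hm : 0 < m) (hc : 0 < c) (hκ : 0 < κ)
    (u : Fin 3 → ℝ) (i j k : Fin 3) :
    ∫ p : Fin 3 → ℝ, boost m c u p i * boost m c u p j * boost m c u p k / pZero m c p *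
        Real.exp (-(κ * pZero m c p)) =
      (dot3 (boostRow c u i) (boostRow c u j) * (u k / c) +
        dot3 (boostRow c u i) (boostRow c u k) * (u j / c) +
        dot3 (boostRow c u j) (boostRow c u k) * (u i / c)) *
          ((∫ p : Fin 3 → ℝ, dot3 p p * Real.exp (-(κ * pZero m c p))) / 3) +
      u i * u j * u k / c ^ 3 * (m ^ 2 * c ^ 2 *
        (∫ p : Fin 3 → ℝ, Real.exp (-(κ * pZero m c p))) +
          ∫ p : Fin 3 → ℝ, dot3 p p * Real.exp (-(κ * pZero m c p))) := by
  set H : (Fin 3 → ℝ) → ℝ := fun p =>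
    boost m c u p i * boost m c u p j * boost m c u p k / pZero m c p *
        Real.exp (-(κ * pZero m c p)) with hH
  have hHint : Integrable H := integrable_boost hm hc hκ u i j k
  have hneg : ∀ p : Fin 3 → ℝ, pZero m c (-p) = pZero m c p := fun p => by simp [pZero, dot3]
  have hneg' : ∀ v p : Fin 3 → ℝ, dot3 v (-p) = -dot3 v p := fun v p => by simp [dot3]
  have hsum : ∀ p, H p + H (-p) = 2 * (
      (u k / c) * (dot3 (boostRow c u i) p * dot3 (boostRow c u j) p *
        Real.exp (-(κ * pZero m c p))) +
      (u j / c) * (dot3 (boostRow c u i) p * dot3 (boostRow c u k) p *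
        Real.exp (-(κ * pZero m c p))) +
      (u i / c) * (dot3 (boostRow c u j) p * dot3 (boostRow c u k) p *
        Real.exp (-(κ * pZero m c p))) +
      u i * u j * u k / c ^ 3 * (m ^ 2 * c ^ 2) * Real.exp (-(κ * pZero m c p)) +
      u i * u j * u k / c ^ 3 * (dot3 p p * Real.exp (-(κ * pZero m c p)))) := fun p => by
    have h0 := pZero_pos hm hc p
    have hP : dot3 p p = pZero m c p ^ 2 - m ^ 2 * c ^ 2 := by rw [pZero_sq]; ring
    simp only [hH, boost_apply, hneg, hneg', hP]
    field_simp
    ring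
  have hI0 : Integrable fun p : Fin 3 → ℝ => Real.exp (-(κ * pZero m c p)) := by
    simpa using integrable_mul_exp (m := m) (c := c) hκ (f := fun _ => 1) continuous_const 1 0
      (by simp)
  have hI2 : Integrable fun p : Fin 3 → ℝ => dot3 p p * Real.exp (-(κ * pZero m c p)) := by
    refine integrable_mul_exp hκ continuous_dot3_self 1 2 fun p => ?_
    rw [abs_of_nonneg (dot3_self_nonneg p), one_mul, pZero_sq]
    nlinarith [sq_nonneg (m * c)]
  have hIvw : ∀ v w : Fin 3 → ℝ, Integrable fun p : Fin 3 → ℝ =>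
      dot3 v p * dot3 w p * Real.exp (-(κ * pZero m c p)) := fun v w => by
    refine integrable_mul_exp hκ (by unfold dot3; fun_prop)
      (Real.sqrt (dot3 v v) * Real.sqrt (dot3 w w)) 2 fun p => ?_
    have hle : ∀ v : Fin 3 → ℝ, |dot3 v p| ≤ Real.sqrt (dot3 v v) * pZero m c p := fun v => by
      rw [pZero, ← Real.sqrt_mul (dot3_self_nonneg v)]
      apply Real.abs_le_sqrt
      have := mul_nonneg (dot3_self_nonneg v) (sq_nonneg (m * c))
      nlinarith [dot3_sq_le v p]
    rw [abs_mul]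
    calc _ ≤ (Real.sqrt (dot3 v v) * pZero m c p) * (Real.sqrt (dot3 w w) * pZero m c p) :=
          mul_le_mul (hle v) (hle w) (abs_nonneg _) ((abs_nonneg _).trans (hle v))
      _ = _ := by ring
  have h2 : ∫ p, H p = (∫ p, (H p + H (-p))) / 2 := by
    rw [integral_add hHint hHint.comp_neg, integral_neg_eq_self]
    ring
  rw [h2]
  simp only [hsum]
  have e1 := (hIvw (boostRow c u i) (boostRow c u j)).const_mul (u k / c)
  have e2 := (hIvw (boostRow c u i) (boostRow c u k)).const_mul (u j / c)
  have e3 := (hIvw (boostRow c u j) (boostRow c u k)).const_mul (u i / c)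
  have e4 := hI0.const_mul (u i * u j * u k / c ^ 3 * (m ^ 2 * c ^ 2))
  have e5 := hI2.const_mul (u i * u j * u k / c ^ 3)
  rw [integral_const_mul, integral_add (((e1.fun_add e2).fun_add e3).fun_add e4) e5,
    integral_add ((e1.fun_add e2).fun_add e3) e4, integral_add (e1.fun_add e2) e3, integral_add e1 e2]
  simp only [integral_const_mul, integral_dot3_mul_dot3 hκ]
  ring

/-- For all `i, j, k`:
`c ∫ (p_i p_j p_k / p⁰) M(p) dp = [n₀m²/(γK₂(γ))](6K₃(γ)+γK₂(γ))u_iu_ju_k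
  + [n₀m²c²K₃(γ)/(γK₂(γ))](u_iδ_{jk} + u_jδ_{ik} + u_kδ_{ij})`. -/
theorem stmt15 (m c n₀ θ γ u0 : ℝ) (hm : 0 < m) (hc : 0 < c) (hn : 0 < n₀) (hθ : 0 < θ)
    (u : Fin 3 → ℝ) (hγ : γ = m * c ^ 2 / θ) (hu0 : u0 = Real.sqrt (dot3 u u + c ^ 2))
    (i j k : Fin 3) :
    c * ∫ p : Fin 3 → ℝ, p i * p j * p k / pZero m c p * Mloc m c n₀ θ u p
      = n₀ * m ^ 2 / (γ * Kbessel 2 γ) * (6 * Kbessel 3 γ + γ * Kbessel 2 γ)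
            * u i * u j * u k
        + n₀ * m ^ 2 * c ^ 2 * Kbessel 3 γ / (γ * Kbessel 2 γ) *
            (u i * (if j = k then (1 : ℝ) else 0)
              + u j * (if i = k then (1 : ℝ) else 0)
              + u k * (if i = j then (1 : ℝ) else 0)) := by
  set κ : ℝ := c / θ with hκdef
  have hκ : 0 < κ := div_pos hc hθ
  have hmc : 0 < m * c := mul_pos hm hc
  have hγκ : γ = κ * (m * c) := by rw [hγ, hκdef]; ring
  have hγpos : 0 < γ := hγκ ▸ mul_pos hκ hmc
  have hK2 := Kbessel_two hmc hκ
  have hK3 := Kbessel_three hmc hκ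
  rw [← hγκ] at hK2 hK3
  have hR2 : radialMoment (m * c) κ 2 = γ ^ 2 * Kbessel 2 γ / κ ^ 3 := by
    rw [hK2]; field_simp
  have hR4 : radialMoment (m * c) κ 4 = 3 * γ ^ 3 * Kbessel 3 γ / κ ^ 5 := by
    rw [hK3]; field_simp
  have hmain : ∫ p : Fin 3 → ℝ, p i * p j * p k / pZero m c p * Mloc m c n₀ θ u p =
      n₀ * γ / (4 * Real.pi * m ^ 3 * c ^ 3 * Kbessel 2 γ) *
        ∫ p : Fin 3 → ℝ, boost m c u p i * boost m c u p j * boost m c u p k / pZero m c p *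
          Real.exp (-(κ * pZero m c p)) := by
    have hb := integral_boost hm hc u fun p => p i * p j * p k *
      Real.exp ((dot3 u p - Real.sqrt (dot3 u u + c ^ 2) * pZero m c p) / θ)
    simp only [lorentz_invariance hm hc] at hb
    have hL : ∀ p : Fin 3 → ℝ, p i * p j * p k / pZero m c p * Mloc m c n₀ θ u p =
        n₀ * γ / (4 * Real.pi * m ^ 3 * c ^ 3 * Kbessel 2 γ) * (p i * p j * p k *
      Real.exp ((dot3 u p - Real.sqrt (dot3 u u + c ^ 2) * pZero m c p) / θ) / pZero m c p) :=
      fun p => by rw [Mloc, ← hγ]; ring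
    simp only [hL]
    rw [integral_const_mul, hb]
    congr 1
    refine integral_congr_ae (Filter.Eventually.of_forall fun p => ?_)
    dsimp only
    rw [show -(c * pZero m c p) / θ = -(κ * pZero m c p) by rw [hκdef]; ring]
    ring
  rw [hmain, integral_boost_even hm hc hκ, integral_exp_pZero, integral_dot3_exp_pZero, hR2, hR4,
    dot3_boostRow hc, dot3_boostRow hc, dot3_boostRow hc]
  have hκ' : κ = γ / (m * c) := by rw [hγκ]; field_simp
  rw [hκ']
  have hpi := Real.pi_pos
  generalize (if i = j then (1 : ℝ) else 0) = dij
  generalize (if i = k then (1 : ℝ) else 0) = dik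
  generalize (if j = k then (1 : ℝ) else 0) = djk
  -- both sides carry the factor `1 / K₂(γ)`, hence vanish together in the degenerate case
  by_cases hK : Kbessel 2 γ = 0
  · simp [hK]
  field_simp
  ring
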